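/- In R(4), the element w_{1,2,3} is central: it commutes with C_I for every nonempty subset I ⊆ {1,2,3,4} (in particular w_{1,2,3} commutes with C₃₄, C₁₂₄, C₁₃₄, C₂₃₄). -/

import Mathlib

noncomputable section

open Finset

variable {A : Type*} [Ring A] [Algebra ℂ A]

/-- Commutator `[a,b] = ab − ba`. -/
def cm (a b : A) : A := a * b - b * a

/-- Anticommutator `{a,b} = ab + ba`. -/
def acm (a b : A) : A := a * b + b * a

/-- Relations (R1): `[C_I, C_J] = 0` whenever `I ∩ J = ∅`, `I ⊆ J` or `J ⊆ I`. -/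
def RelR1 (C : Finset (Fin 4) → A) : Prop :=
  ∀ I J : Finset (Fin 4), (I ∩ J = ∅ ∨ I ⊆ J ∨ J ⊆ I) → cm (C I) (C J) = 0

/-- Relations (R2): `C_I = (1/2)∑_{i≠j∈I} C_{ij} − (|I|−2)∑_{i∈I} C_i` for `|I| ≥ 3`. -/
def RelR2 (C : Finset (Fin 4) → A) : Prop :=
  ∀ I : Finset (Fin 4), 3 ≤ I.card →
    C I = ((1 : ℂ)/2) • (∑ i ∈ I, ∑ j ∈ I \ {i}, C {i, j})
      - ((I.card : ℂ) - 2) • ∑ i ∈ I, C {i}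

/-- Relations (R3), for nonempty pairwise disjoint `I, J, K`. -/
def RelR3 (C : Finset (Fin 4) → A) : Prop :=
  ∀ I J K : Finset (Fin 4), I.Nonempty → J.Nonempty → K.Nonempty →
    Disjoint I J → Disjoint J K → Disjoint I K →
    cm (C (I ∪ J)) (C (J ∪ K)) = cm (C (J ∪ K)) (C (I ∪ K)) ∧
    cm (C (J ∪ K)) (C (I ∪ K)) = cm (C (I ∪ K)) (C (I ∪ J)) ∧
    cm (C (J ∪ K)) (cm (C (I ∪ J)) (C (J ∪ K))) =
      2 * (C (I ∪ K) * C (J ∪ K)) - 2 * (C (J ∪ K) * C (I ∪ J))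
        + 2 * ((C J - C K) * (C (I ∪ J ∪ K) - C I))

/-- Relations (R4), for pairwise distinct `i, j, k, l`. -/
def RelR4 (C : Finset (Fin 4) → A) : Prop :=
  ∀ i j k l : Fin 4, i ≠ j → i ≠ k → i ≠ l → j ≠ k → j ≠ l → k ≠ l →
    ((1 : ℂ)/2) • cm (C {k, l}) (cm (C {i, j}) (C {j, k})) =
      C {i, k} * C {j, l} - C {i, l} * C {j, k}
      + (C {i} + C {l}) * C {j, k} + (C {j} + C {k}) * C {i, l}
      - (C {j} + C {l}) * C {i, k} - (C {i} + C {k}) * C {j, l}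
      + (C {i} - C {j}) * (C {l} - C {k})

/-- Relations (R5), for pairwise distinct `i, j, k, l`. -/
def RelR5 (C : Finset (Fin 4) → A) : Prop :=
  ∀ i j k l : Fin 4, i ≠ j → i ≠ k → i ≠ l → j ≠ k → j ≠ l → k ≠ l →
    ((1 : ℂ)/2) • cm (cm (C {i, j}) (C {j, k})) (cm (C {j, k}) (C {k, l})) =
      -((cm (C {i, j}) (C {j, l}) + cm (C {i, k}) (C {k, l})) * (C {j, k} - C {j} - C {k}))

/-- The Casimir-type element `w_{I,J,K}` of the Racah algebra. -/
def wElt (C : Finset (Fin 4) → A) (I J K : Finset (Fin 4)) : A :=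
  ((1 : ℂ)/4) • (cm (C (I ∪ J)) (C (J ∪ K))) ^ 2
  - ((1 : ℂ)/2) • acm ((C (I ∪ J)) ^ 2) (C (J ∪ K))
  - ((1 : ℂ)/2) • acm (C (I ∪ J)) ((C (J ∪ K)) ^ 2)
  + (C (I ∪ J)) ^ 2 + (C (J ∪ K)) ^ 2 + acm (C (I ∪ J)) (C (J ∪ K))
  + ((1 : ℂ)/2) • ((C I + C J + C K + C (I ∪ J ∪ K)) *
      (acm (C (I ∪ J)) (C (J ∪ K)) - 2 * C (I ∪ J) - 2 * C (J ∪ K)))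
  - (C I - C (I ∪ J ∪ K)) * (C J - C K) * C (I ∪ J)
  - (C I - C J) * (C (I ∪ J ∪ K) - C K) * C (J ∪ K)
  + (C I * C K - C (I ∪ J ∪ K) * C J) * (C (I ∪ J ∪ K) - C I + C J - C K)
  + (C I + C K) * (C (I ∪ J ∪ K) + C J)

set_option linter.unusedSimpArgs false
set_option linter.unusedVariables false
theorem assocRule {A : Type*} [Ring A] {y x e : A} (h : y * x = e) (t : A) :
    y * (x * t) = e * t := by
  rw [← mul_assoc, h]

theorem jacobi1 {R A : Type*} [CommRing R] [Ring A] [Algebra R A]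
    (c1 c2 c3 c4 : R) (x12 x13 x23 x14 x24 x34 f123 f124 f134 f234 : A)
    (r_x23_x12 : x23 * x12 = x12 * x23 - (2 : R) • f123)
    (r_x14_x12 : x14 * x12 = x12 * x14 + (2 : R) • f124)
    (r_x14_x23 : x14 * x23 = x23 * x14)
    (r_x24_x12 : x24 * x12 = x12 * x24 - (2 : R) • f124)
    (r_x24_x13 : x24 * x13 = x13 * x24)
    (r_x24_x23 : x24 * x23 = x23 * x24 + (2 : R) • f234)
    (r_x34_x12 : x34 * x12 = x12 * x34)
    (r_f123_x12 : f123 * x12 = x12 * f123 + x12 * x13 - x23 * x12 + (-c1 + c2 : R) • x12 + (-c1 + c2 : R) • x13 + (-c1 + c2 : R) • x23 + (c1^2 + 2 * c1 * c3 - c2^2 - 2 * c2 * c3 : R) • (1 : A))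
    (r_f123_x24 : f123 * x24 = x24 * f123 + x12 * x34 - x14 * x23 - (c3 + c4 : R) • x12 + (c1 + c4 : R) • x23 + (c2 + c3 : R) • x14 - (c1 + c2 : R) • x34 + (-c1 * c2 + c1 * c4 + c2 * c3 - c3 * c4 : R) • (1 : A))
    (r_f124_x13 : f124 * x13 = x13 * f124 - x12 * x34 + x23 * x14 + (c3 + c4 : R) • x12 - (c1 + c4 : R) • x23 - (c2 + c3 : R) • x14 + (c1 + c2 : R) • x34 + (c1 * c2 - c1 * c4 - c2 * c3 + c3 * c4 : R) • (1 : A))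
    (r_f124_x23 : f124 * x23 = x23 * f124 + x12 * x34 - x13 * x24 - (c3 + c4 : R) • x12 + (c2 + c4 : R) • x13 + (c1 + c3 : R) • x24 - (c1 + c2 : R) • x34 + (-c1 * c2 + c1 * c3 + c2 * c4 - c3 * c4 : R) • (1 : A))
    (r_f134_x12 : f134 * x12 = x12 * f134 - x13 * x24 + x23 * x14 + (c2 + c4 : R) • x13 - (c1 + c4 : R) • x23 - (c2 + c3 : R) • x14 + (c1 + c3 : R) • x24 + (c1 * c3 - c1 * c4 - c2 * c3 + c2 * c4 : R) • (1 : A))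
    (r_f234_x12 : f234 * x12 = x12 * f234 + x13 * x24 - x23 * x14 - (c2 + c4 : R) • x13 + (c1 + c4 : R) • x23 + (c2 + c3 : R) • x14 - (c1 + c3 : R) • x24 + (-c1 * c3 + c1 * c4 + c2 * c3 - c2 * c4 : R) • (1 : A))
    (r_f124_f123 : f124 * f123 = f123 * f124 - f134 * x12 - f234 * x12 + (c1 + c2 : R) • f134 + (c1 + c2 : R) • f234)
 :
    (2 : R) • (x12 * f134) - (2 : R) • (x13 * f124) + (2 : R) • (x14 * f123) - (2 * c1 + 2 * c4 : R) • f123 + (2 * c1 + 2 * c3 : R) • f124 - (2 * c1 + 2 * c2 : R) • f134 - (4 * c1 : R) • f234 = 0 := by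
  have e : (x24 * f123 + x12 * x34 - x14 * x23 - (c3 + c4 : R) • x12 + (c1 + c4 : R) • x23 + (c2 + c3 : R) • x14 - (c1 + c2 : R) • x34 + (-c1 * c2 + c1 * c4 + c2 * c3 - c3 * c4 : R) • (1 : A)) * x12 =
      f123 * (x12 * x24 - (2 : R) • f124) := by
    rw [← r_f123_x24, ← r_x24_x12, mul_assoc]
  simp only [mul_add, add_mul, mul_sub, sub_mul, mul_neg, neg_mul, smul_mul_assoc, mul_smul_comm, mul_one,
    one_mul, mul_assoc] at e
  simp only [mul_add, add_mul, mul_sub, sub_mul, mul_neg, neg_mul, smul_mul_assoc, mul_smul_comm, mul_one,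
    one_mul, mul_assoc,
    r_x23_x12, assocRule r_x23_x12,
    r_x14_x12, assocRule r_x14_x12,
    r_x14_x23, assocRule r_x14_x23,
    r_x24_x12, assocRule r_x24_x12,
    r_x24_x13, assocRule r_x24_x13,
    r_x24_x23, assocRule r_x24_x23,
    r_x34_x12, assocRule r_x34_x12,
    r_f123_x12, assocRule r_f123_x12,
    r_f123_x24, assocRule r_f123_x24,
    r_f124_x13, assocRule r_f124_x13,
    r_f124_x23, assocRule r_f124_x23,
    r_f134_x12, assocRule r_f134_x12,
    r_f234_x12, assocRule r_f234_x12,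
    r_f124_f123, assocRule r_f124_f123] at e
  linear_combination (norm := module) e

theorem jacobi2 {R A : Type*} [CommRing R] [Ring A] [Algebra R A]
    (c1 c2 c3 c4 : R) (x12 x13 x23 x14 x24 x34 f123 f124 f134 f234 : A)
    (r_x13_x12 : x13 * x12 = x12 * x13 + (2 : R) • f123)
    (r_x23_x12 : x23 * x12 = x12 * x23 - (2 : R) • f123)
    (r_x14_x12 : x14 * x12 = x12 * x14 + (2 : R) • f124)
    (r_x14_x13 : x14 * x13 = x13 * x14 + (2 : R) • f134)
    (r_x14_x23 : x14 * x23 = x23 * x14)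
    (r_x24_x12 : x24 * x12 = x12 * x24 - (2 : R) • f124)
    (r_x24_x13 : x24 * x13 = x13 * x24)
    (r_x34_x12 : x34 * x12 = x12 * x34)
    (r_f123_x14 : f123 * x14 = x14 * f123 - x12 * x34 + x24 * x13 + (c3 + c4 : R) • x12 - (c2 + c4 : R) • x13 - (c1 + c3 : R) • x24 + (c1 + c2 : R) • x34 + (c1 * c2 - c1 * c3 - c2 * c4 + c3 * c4 : R) • (1 : A))
    (r_f123_x24 : f123 * x24 = x24 * f123 + x12 * x34 - x14 * x23 - (c3 + c4 : R) • x12 + (c1 + c4 : R) • x23 + (c2 + c3 : R) • x14 - (c1 + c2 : R) • x34 + (-c1 * c2 + c1 * c4 + c2 * c3 - c3 * c4 : R) • (1 : A))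
    (r_f124_x12 : f124 * x12 = x12 * f124 + x12 * x14 - x24 * x12 + (-c1 + c2 : R) • x12 + (-c1 + c2 : R) • x14 + (-c1 + c2 : R) • x24 + (c1^2 + 2 * c1 * c4 - c2^2 - 2 * c2 * c4 : R) • (1 : A))
    (r_f124_x13 : f124 * x13 = x13 * f124 - x12 * x34 + x23 * x14 + (c3 + c4 : R) • x12 - (c1 + c4 : R) • x23 - (c2 + c3 : R) • x14 + (c1 + c2 : R) • x34 + (c1 * c2 - c1 * c4 - c2 * c3 + c3 * c4 : R) • (1 : A))
    (r_f134_x12 : f134 * x12 = x12 * f134 - x13 * x24 + x23 * x14 + (c2 + c4 : R) • x13 - (c1 + c4 : R) • x23 - (c2 + c3 : R) • x14 + (c1 + c3 : R) • x24 + (c1 * c3 - c1 * c4 - c2 * c3 + c2 * c4 : R) • (1 : A))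
    (r_f234_x12 : f234 * x12 = x12 * f234 + x13 * x24 - x23 * x14 - (c2 + c4 : R) • x13 + (c1 + c4 : R) • x23 + (c2 + c3 : R) • x14 - (c1 + c3 : R) • x24 + (-c1 * c3 + c1 * c4 + c2 * c3 - c2 * c4 : R) • (1 : A))
    (r_f124_f123 : f124 * f123 = f123 * f124 - f134 * x12 - f234 * x12 + (c1 + c2 : R) • f134 + (c1 + c2 : R) • f234)
 :
    (2 : R) • (x12 * f234) + (2 : R) • (x23 * f124) - (2 : R) • (x24 * f123) + (2 * c2 + 2 * c4 : R) • f123 - (2 * c2 + 2 * c3 : R) • f124 - (4 * c2 : R) • f134 - (2 * c1 + 2 * c2 : R) • f234 = 0 := by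
  have e : (x13 * f124 - x12 * x34 + x23 * x14 + (c3 + c4 : R) • x12 - (c1 + c4 : R) • x23 - (c2 + c3 : R) • x14 + (c1 + c2 : R) • x34 + (c1 * c2 - c1 * c4 - c2 * c3 + c3 * c4 : R) • (1 : A)) * x12 =
      f124 * (x12 * x13 + (2 : R) • f123) := by
    rw [← r_f124_x13, ← r_x13_x12, mul_assoc]
  simp only [mul_add, add_mul, mul_sub, sub_mul, mul_neg, neg_mul, smul_mul_assoc, mul_smul_comm, mul_one,
    one_mul, mul_assoc] at e
  simp only [mul_add, add_mul, mul_sub, sub_mul, mul_neg, neg_mul, smul_mul_assoc, mul_smul_comm, mul_one,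
    one_mul, mul_assoc,
    r_x13_x12, assocRule r_x13_x12,
    r_x23_x12, assocRule r_x23_x12,
    r_x14_x12, assocRule r_x14_x12,
    r_x14_x13, assocRule r_x14_x13,
    r_x14_x23, assocRule r_x14_x23,
    r_x24_x12, assocRule r_x24_x12,
    r_x24_x13, assocRule r_x24_x13,
    r_x34_x12, assocRule r_x34_x12,
    r_f123_x14, assocRule r_f123_x14,
    r_f123_x24, assocRule r_f123_x24,
    r_f124_x12, assocRule r_f124_x12,
    r_f124_x13, assocRule r_f124_x13,
    r_f134_x12, assocRule r_f134_x12,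
    r_f234_x12, assocRule r_f234_x12,
    r_f124_f123, assocRule r_f124_f123] at e
  linear_combination (norm := module) e

theorem jacobi3 {R A : Type*} [CommRing R] [Ring A] [Algebra R A]
    (c1 c2 c3 c4 : R) (x12 x13 x23 x14 x24 x34 f123 f124 f134 f234 : A)
    (r_x13_x12 : x13 * x12 = x12 * x13 + (2 : R) • f123)
    (r_x23_x13 : x23 * x13 = x13 * x23 + (2 : R) • f123)
    (r_x14_x12 : x14 * x12 = x12 * x14 + (2 : R) • f124)
    (r_x14_x13 : x14 * x13 = x13 * x14 + (2 : R) • f134)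
    (r_x24_x13 : x24 * x13 = x13 * x24)
    (r_x34_x12 : x34 * x12 = x12 * x34)
    (r_x34_x13 : x34 * x13 = x13 * x34 - (2 : R) • f134)
    (r_f123_x14 : f123 * x14 = x14 * f123 - x12 * x34 + x24 * x13 + (c3 + c4 : R) • x12 - (c2 + c4 : R) • x13 - (c1 + c3 : R) • x24 + (c1 + c2 : R) • x34 + (c1 * c2 - c1 * c3 - c2 * c4 + c3 * c4 : R) • (1 : A))
    (r_f124_x13 : f124 * x13 = x13 * f124 - x12 * x34 + x23 * x14 + (c3 + c4 : R) • x12 - (c1 + c4 : R) • x23 - (c2 + c3 : R) • x14 + (c1 + c2 : R) • x34 + (c1 * c2 - c1 * c4 - c2 * c3 + c3 * c4 : R) • (1 : A))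
    (r_f134_x12 : f134 * x12 = x12 * f134 - x13 * x24 + x23 * x14 + (c2 + c4 : R) • x13 - (c1 + c4 : R) • x23 - (c2 + c3 : R) • x14 + (c1 + c3 : R) • x24 + (c1 * c3 - c1 * c4 - c2 * c3 + c2 * c4 : R) • (1 : A))
    (r_f134_x13 : f134 * x13 = x13 * f134 + x13 * x14 - x34 * x13 + (-c1 + c3 : R) • x13 + (-c1 + c3 : R) • x14 + (-c1 + c3 : R) • x34 + (c1^2 + 2 * c1 * c4 - c3^2 - 2 * c3 * c4 : R) • (1 : A))
    (r_f234_x13 : f234 * x13 = x13 * f234 - x12 * x34 + x23 * x14 + (c3 + c4 : R) • x12 - (c1 + c4 : R) • x23 - (c2 + c3 : R) • x14 + (c1 + c2 : R) • x34 + (c1 * c2 - c1 * c4 - c2 * c3 + c3 * c4 : R) • (1 : A))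
    (r_f134_f123 : f134 * f123 = f123 * f134 + f124 * x13 - f234 * x13 - (c1 + c3 : R) • f124 + (c1 + c3 : R) • f234)
 :
    (2 : R) • (x13 * f234) - (2 : R) • (x23 * f134) - (2 : R) • (x34 * f123) + (2 * c3 + 2 * c4 : R) • f123 + (4 * c3 : R) • f124 + (2 * c2 + 2 * c3 : R) • f134 - (2 * c1 + 2 * c3 : R) • f234 = 0 := by
  have e : (x13 * f134 + x13 * x14 - x34 * x13 + (-c1 + c3 : R) • x13 + (-c1 + c3 : R) • x14 + (-c1 + c3 : R) • x34 + (c1^2 + 2 * c1 * c4 - c3^2 - 2 * c3 * c4 : R) • (1 : A)) * x12 =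
      f134 * (x12 * x13 + (2 : R) • f123) := by
    rw [← r_f134_x13, ← r_x13_x12, mul_assoc]
  simp only [mul_add, add_mul, mul_sub, sub_mul, mul_neg, neg_mul, smul_mul_assoc, mul_smul_comm, mul_one,
    one_mul, mul_assoc] at e
  simp only [mul_add, add_mul, mul_sub, sub_mul, mul_neg, neg_mul, smul_mul_assoc, mul_smul_comm, mul_one,
    one_mul, mul_assoc,
    r_x13_x12, assocRule r_x13_x12,
    r_x23_x13, assocRule r_x23_x13,
    r_x14_x12, assocRule r_x14_x12,
    r_x14_x13, assocRule r_x14_x13,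
    r_x24_x13, assocRule r_x24_x13,
    r_x34_x12, assocRule r_x34_x12,
    r_x34_x13, assocRule r_x34_x13,
    r_f123_x14, assocRule r_f123_x14,
    r_f124_x13, assocRule r_f124_x13,
    r_f134_x12, assocRule r_f134_x12,
    r_f134_x13, assocRule r_f134_x13,
    r_f234_x13, assocRule r_f234_x13,
    r_f134_f123, assocRule r_f134_f123] at e
  linear_combination (norm := module) e

/-- Twice the Casimir element. -/
def casTwo {R A : Type*} [CommRing R] [Ring A] [Algebra R A]
    (c1 c2 c3 : R) (a b d f : A) : A :=
  (2 : R) • (f * f) - (a * a * b + b * (a * a)) - (a * (b * b) + b * b * a)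
  + (2 : R) • (a * a) + (2 : R) • (b * b) + (2 : R) • (a * b + b * a)
  + (c1 + c2 + c3 : R) • (a * b + b * a - (2 : R) • a - (2 : R) • b)
  + d * (a * b + b * a - (2 : R) • a - (2 : R) • b)
  - (2 * (c2 - c3) : R) • (c1 • a - d * a)
  - (2 * (c1 - c2) : R) • (d * b - c3 • b)
  + (2 : R) • (((c1 * c3 : R) • (1 : A) - c2 • d) * (d - (c1 - c2 + c3 : R) • (1 : A)))
  + (2 * (c1 + c3) : R) • (d + c2 • (1 : A))

set_option maxHeartbeats 1000000 in
theorem cas_inner {R A : Type*} [CommRing R] [Ring A] [Algebra R A]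
    (c1 c2 c3 : R) (x12 x13 x23 f123 y : A) (hy : y = x12 ∨ y = x13 ∨ y = x23)
    (r_x13_x12 : x13 * x12 = x12 * x13 + (2 : R) • f123)
    (r_x23_x12 : x23 * x12 = x12 * x23 - (2 : R) • f123)
    (r_x23_x13 : x23 * x13 = x13 * x23 + (2 : R) • f123)
    (r_f123_x12 : f123 * x12 = x12 * f123 + x12 * x13 - x23 * x12 + (-c1 + c2 : R) • x12 + (-c1 + c2 : R) • x13 + (-c1 + c2 : R) • x23 + (c1^2 + 2 * c1 * c3 - c2^2 - 2 * c2 * c3 : R) • (1 : A))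
    (r_f123_x13 : f123 * x13 = x13 * f123 - x13 * x12 + x23 * x13 + (c1 - c3 : R) • x12 + (c1 - c3 : R) • x13 + (c1 - c3 : R) • x23 + (-c1^2 - 2 * c1 * c2 + 2 * c2 * c3 + c3^2 : R) • (1 : A))
    (r_f123_x23 : f123 * x23 = x23 * f123 - x13 * x23 + x23 * x12 + (-c2 + c3 : R) • x12 + (-c2 + c3 : R) • x13 + (-c2 + c3 : R) • x23 + (2 * c1 * c2 - 2 * c1 * c3 + c2^2 - c3^2 : R) • (1 : A))
 :
    (casTwo c1 c2 c3 x12 x23 (x12 + x13 + x23 - (c1 + c2 + c3 : R) • (1 : A)) f123) * y - y * (casTwo c1 c2 c3 x12 x23 (x12 + x13 + x23 - (c1 + c2 + c3 : R) • (1 : A)) f123) = 0 := by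
  rcases hy with rfl | rfl | rfl
  all_goals
    unfold casTwo
    simp only [mul_add, add_mul, mul_sub, sub_mul, mul_neg, neg_mul, smul_mul_assoc, mul_smul_comm, mul_one,
      one_mul, mul_assoc]
    simp only [mul_add, add_mul, mul_sub, sub_mul, mul_neg, neg_mul, smul_mul_assoc, mul_smul_comm, mul_one,
      one_mul, mul_assoc,
      r_x13_x12, assocRule r_x13_x12,
      r_x23_x12, assocRule r_x23_x12,
      r_x23_x13, assocRule r_x23_x13,
      r_f123_x12, assocRule r_f123_x12,
      r_f123_x13, assocRule r_f123_x13,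
      r_f123_x23, assocRule r_f123_x23]
    module

theorem cas_x34 {R A : Type*} [CommRing R] [Ring A] [Algebra R A]
    (c1 c2 c3 c4 : R) (x12 x13 x23 x14 x24 x34 f123 f124 f134 f234 : A)
    (r_x13_x12 : x13 * x12 = x12 * x13 + (2 : R) • f123)
    (r_x23_x12 : x23 * x12 = x12 * x23 - (2 : R) • f123)
    (r_x23_x13 : x23 * x13 = x13 * x23 + (2 : R) • f123)
    (r_x14_x12 : x14 * x12 = x12 * x14 + (2 : R) • f124)
    (r_x14_x13 : x14 * x13 = x13 * x14 + (2 : R) • f134)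
    (r_x14_x23 : x14 * x23 = x23 * x14)
    (r_x24_x12 : x24 * x12 = x12 * x24 - (2 : R) • f124)
    (r_x24_x13 : x24 * x13 = x13 * x24)
    (r_x24_x23 : x24 * x23 = x23 * x24 + (2 : R) • f234)
    (r_x34_x12 : x34 * x12 = x12 * x34)
    (r_x34_x13 : x34 * x13 = x13 * x34 - (2 : R) • f134)
    (r_x34_x23 : x34 * x23 = x23 * x34 - (2 : R) • f234)
    (r_f123_x12 : f123 * x12 = x12 * f123 + x12 * x13 - x23 * x12 + (-c1 + c2 : R) • x12 + (-c1 + c2 : R) • x13 + (-c1 + c2 : R) • x23 + (c1^2 + 2 * c1 * c3 - c2^2 - 2 * c2 * c3 : R) • (1 : A))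
    (r_f123_x13 : f123 * x13 = x13 * f123 - x13 * x12 + x23 * x13 + (c1 - c3 : R) • x12 + (c1 - c3 : R) • x13 + (c1 - c3 : R) • x23 + (-c1^2 - 2 * c1 * c2 + 2 * c2 * c3 + c3^2 : R) • (1 : A))
    (r_f123_x23 : f123 * x23 = x23 * f123 - x13 * x23 + x23 * x12 + (-c2 + c3 : R) • x12 + (-c2 + c3 : R) • x13 + (-c2 + c3 : R) • x23 + (2 * c1 * c2 - 2 * c1 * c3 + c2^2 - c3^2 : R) • (1 : A))
    (r_f123_x14 : f123 * x14 = x14 * f123 - x12 * x34 + x24 * x13 + (c3 + c4 : R) • x12 - (c2 + c4 : R) • x13 - (c1 + c3 : R) • x24 + (c1 + c2 : R) • x34 + (c1 * c2 - c1 * c3 - c2 * c4 + c3 * c4 : R) • (1 : A))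
    (r_f123_x24 : f123 * x24 = x24 * f123 + x12 * x34 - x14 * x23 - (c3 + c4 : R) • x12 + (c1 + c4 : R) • x23 + (c2 + c3 : R) • x14 - (c1 + c2 : R) • x34 + (-c1 * c2 + c1 * c4 + c2 * c3 - c3 * c4 : R) • (1 : A))
    (r_f123_x34 : f123 * x34 = x34 * f123 - x13 * x24 + x14 * x23 + (c2 + c4 : R) • x13 - (c1 + c4 : R) • x23 - (c2 + c3 : R) • x14 + (c1 + c3 : R) • x24 + (c1 * c3 - c1 * c4 - c2 * c3 + c2 * c4 : R) • (1 : A))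
    (r_f124_x12 : f124 * x12 = x12 * f124 + x12 * x14 - x24 * x12 + (-c1 + c2 : R) • x12 + (-c1 + c2 : R) • x14 + (-c1 + c2 : R) • x24 + (c1^2 + 2 * c1 * c4 - c2^2 - 2 * c2 * c4 : R) • (1 : A))
    (r_f124_x13 : f124 * x13 = x13 * f124 - x12 * x34 + x23 * x14 + (c3 + c4 : R) • x12 - (c1 + c4 : R) • x23 - (c2 + c3 : R) • x14 + (c1 + c2 : R) • x34 + (c1 * c2 - c1 * c4 - c2 * c3 + c3 * c4 : R) • (1 : A))
    (r_f124_x23 : f124 * x23 = x23 * f124 + x12 * x34 - x13 * x24 - (c3 + c4 : R) • x12 + (c2 + c4 : R) • x13 + (c1 + c3 : R) • x24 - (c1 + c2 : R) • x34 + (-c1 * c2 + c1 * c3 + c2 * c4 - c3 * c4 : R) • (1 : A))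
    (r_f134_x12 : f134 * x12 = x12 * f134 - x13 * x24 + x23 * x14 + (c2 + c4 : R) • x13 - (c1 + c4 : R) • x23 - (c2 + c3 : R) • x14 + (c1 + c3 : R) • x24 + (c1 * c3 - c1 * c4 - c2 * c3 + c2 * c4 : R) • (1 : A))
    (r_f134_x13 : f134 * x13 = x13 * f134 + x13 * x14 - x34 * x13 + (-c1 + c3 : R) • x13 + (-c1 + c3 : R) • x14 + (-c1 + c3 : R) • x34 + (c1^2 + 2 * c1 * c4 - c3^2 - 2 * c3 * c4 : R) • (1 : A))
    (r_f134_x23 : f134 * x23 = x23 * f134 - x12 * x34 + x13 * x24 + (c3 + c4 : R) • x12 - (c2 + c4 : R) • x13 - (c1 + c3 : R) • x24 + (c1 + c2 : R) • x34 + (c1 * c2 - c1 * c3 - c2 * c4 + c3 * c4 : R) • (1 : A))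
    (r_f234_x12 : f234 * x12 = x12 * f234 + x13 * x24 - x23 * x14 - (c2 + c4 : R) • x13 + (c1 + c4 : R) • x23 + (c2 + c3 : R) • x14 - (c1 + c3 : R) • x24 + (-c1 * c3 + c1 * c4 + c2 * c3 - c2 * c4 : R) • (1 : A))
    (r_f234_x13 : f234 * x13 = x13 * f234 - x12 * x34 + x23 * x14 + (c3 + c4 : R) • x12 - (c1 + c4 : R) • x23 - (c2 + c3 : R) • x14 + (c1 + c2 : R) • x34 + (c1 * c2 - c1 * c4 - c2 * c3 + c3 * c4 : R) • (1 : A))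
    (r_f234_x23 : f234 * x23 = x23 * f234 + x23 * x24 - x34 * x23 + (-c2 + c3 : R) • x23 + (-c2 + c3 : R) • x24 + (-c2 + c3 : R) • x34 + (c2^2 + 2 * c2 * c4 - c3^2 - 2 * c3 * c4 : R) • (1 : A))
    (r_f124_f123 : f124 * f123 = f123 * f124 - f134 * x12 - f234 * x12 + (c1 + c2 : R) • f134 + (c1 + c2 : R) • f234)
    (r_f134_f123 : f134 * f123 = f123 * f134 + f124 * x13 - f234 * x13 - (c1 + c3 : R) • f124 + (c1 + c3 : R) • f234)
    (r_f234_f123 : f234 * f123 = f123 * f234 + f124 * x23 + f134 * x23 - (c2 + c3 : R) • f124 - (c2 + c3 : R) • f134)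
 :
    (casTwo c1 c2 c3 x12 x23 (x12 + x13 + x23 - (c1 + c2 + c3 : R) • (1 : A)) f123) * x34 - x34 * (casTwo c1 c2 c3 x12 x23 (x12 + x13 + x23 - (c1 + c2 + c3 : R) • (1 : A)) f123) = 0 := by
  have g1 := jacobi1 c1 c2 c3 c4 x12 x13 x23 x14 x24 x34 f123 f124 f134 f234 r_x23_x12 r_x14_x12 r_x14_x23 r_x24_x12 r_x24_x13 r_x24_x23 r_x34_x12 r_f123_x12 r_f123_x24 r_f124_x13 r_f124_x23 r_f134_x12 r_f234_x12 r_f124_f123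
  have g2 := jacobi2 c1 c2 c3 c4 x12 x13 x23 x14 x24 x34 f123 f124 f134 f234 r_x13_x12 r_x23_x12 r_x14_x12 r_x14_x13 r_x14_x23 r_x24_x12 r_x24_x13 r_x34_x12 r_f123_x14 r_f123_x24 r_f124_x12 r_f124_x13 r_f134_x12 r_f234_x12 r_f124_f123
  have g3 := jacobi3 c1 c2 c3 c4 x12 x13 x23 x14 x24 x34 f123 f124 f134 f234 r_x13_x12 r_x23_x13 r_x14_x12 r_x14_x13 r_x24_x13 r_x34_x12 r_x34_x13 r_f123_x14 r_f124_x13 r_f134_x12 r_f134_x13 r_f234_x13 r_f134_f123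
  have e : ((2 : R) • (x12 * f134) - (2 : R) • (x13 * f124) + (2 : R) • (x14 * f123) - (2 * c1 + 2 * c4 : R) • f123 + (2 * c1 + 2 * c3 : R) • f124 - (2 * c1 + 2 * c2 : R) • f134 - (4 * c1 : R) • f234) * (x23 - (c2 + c3 : R) • (1 : A)) + (x23 - (c2 + c3 : R) • (1 : A)) * ((2 : R) • (x12 * f134) - (2 : R) • (x13 * f124) + (2 : R) • (x14 * f123) - (2 * c1 + 2 * c4 : R) • f123 + (2 * c1 + 2 * c3 : R) • f124 - (2 * c1 + 2 * c2 : R) • f134 - (4 * c1 : R) • f234)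
      + ((2 : R) • (x12 * f234) + (2 : R) • (x23 * f124) - (2 : R) • (x24 * f123) + (2 * c2 + 2 * c4 : R) • f123 - (2 * c2 + 2 * c3 : R) • f124 - (4 * c2 : R) • f134 - (2 * c1 + 2 * c2 : R) • f234) * (x13 - (c1 + c3 : R) • (1 : A)) + (x13 - (c1 + c3 : R) • (1 : A)) * ((2 : R) • (x12 * f234) + (2 : R) • (x23 * f124) - (2 : R) • (x24 * f123) + (2 * c2 + 2 * c4 : R) • f123 - (2 * c2 + 2 * c3 : R) • f124 - (4 * c2 : R) • f134 - (2 * c1 + 2 * c2 : R) • f234) = 0 := by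
    rw [g1, g2]; simp
  unfold casTwo
  simp only [mul_add, add_mul, mul_sub, sub_mul, mul_neg, neg_mul, smul_mul_assoc, mul_smul_comm, mul_one,
    one_mul, mul_assoc] at e ⊢
  simp only [mul_add, add_mul, mul_sub, sub_mul, mul_neg, neg_mul, smul_mul_assoc, mul_smul_comm, mul_one,
    one_mul, mul_assoc,
    r_x13_x12, assocRule r_x13_x12,
    r_x23_x12, assocRule r_x23_x12,
    r_x23_x13, assocRule r_x23_x13,
    r_x14_x12, assocRule r_x14_x12,
    r_x14_x13, assocRule r_x14_x13,
    r_x14_x23, assocRule r_x14_x23,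
    r_x24_x12, assocRule r_x24_x12,
    r_x24_x13, assocRule r_x24_x13,
    r_x24_x23, assocRule r_x24_x23,
    r_x34_x12, assocRule r_x34_x12,
    r_x34_x13, assocRule r_x34_x13,
    r_x34_x23, assocRule r_x34_x23,
    r_f123_x12, assocRule r_f123_x12,
    r_f123_x13, assocRule r_f123_x13,
    r_f123_x23, assocRule r_f123_x23,
    r_f123_x14, assocRule r_f123_x14,
    r_f123_x24, assocRule r_f123_x24,
    r_f123_x34, assocRule r_f123_x34,
    r_f124_x12, assocRule r_f124_x12,
    r_f124_x13, assocRule r_f124_x13,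
    r_f124_x23, assocRule r_f124_x23,
    r_f134_x12, assocRule r_f134_x12,
    r_f134_x13, assocRule r_f134_x13,
    r_f134_x23, assocRule r_f134_x23,
    r_f234_x12, assocRule r_f234_x12,
    r_f234_x13, assocRule r_f234_x13,
    r_f234_x23, assocRule r_f234_x23,
    r_f124_f123, assocRule r_f124_f123,
    r_f134_f123, assocRule r_f134_f123,
    r_f234_f123, assocRule r_f234_f123] at e ⊢
  linear_combination (norm := module) e

/-- The presentation of `R(4)` by symmetric `E i j = C_{ij}` and alternating `F i j k`, with central
scalars `c i = C_i`. -/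
structure RData {R A : Type*} [CommRing R] [Ring A] [Algebra R A]
    (c : Fin 4 → R) (E : Fin 4 → Fin 4 → A) (F : Fin 4 → Fin 4 → Fin 4 → A) : Prop where
  symm : ∀ i j, E j i = E i j
  cyc : ∀ i j k, i ≠ j → i ≠ k → j ≠ k → F j k i = F i j k
  rev : ∀ i j k, F k j i = -F i j k
  p0 : ∀ i j k l, i ≠ j → i ≠ k → i ≠ l → j ≠ k → j ≠ l → k ≠ l → 
    E i j * E k l = E k l * E i j
  p1 : ∀ i j k, i ≠ j → i ≠ k → j ≠ k → E i j * E j k - E j k * E i j = (2 : R) • F i j k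
  p3 : ∀ i j k, i ≠ j → i ≠ k → j ≠ k → E j k * F i j k - F i j k * E j k =
    E i k * E j k - E j k * E i j
      + (c j - c k) • (E i j + E i k + E j k - (2 * c i + c j + c k) • (1 : A))
  p4 : ∀ i j k l, i ≠ j → i ≠ k → i ≠ l → j ≠ k → j ≠ l → k ≠ l → 
    E k l * F i j k - F i j k * E k l =
      E i k * E j l - E i l * E j k + (c i + c l) • E j k + (c j + c k) • E i l
      - (c j + c l) • E i k - (c i + c k) • E j l + ((c i - c j) * (c l - c k)) • (1 : A)
  p5 : ∀ i j k l, i ≠ j → i ≠ k → i ≠ l → j ≠ k → j ≠ l → k ≠ l → 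
    F i j k * F j k l - F j k l * F i j k =
      -((F i j l + F i k l) * (E j k - (c j + c k) • (1 : A)))

theorem RData.perm {R A : Type*} [CommRing R] [Ring A] [Algebra R A]
    {c : Fin 4 → R} {E : Fin 4 → Fin 4 → A} {F : Fin 4 → Fin 4 → Fin 4 → A} (h : RData c E F)
    (s : Fin 4 → Fin 4) (hs : ∀ {i j}, i ≠ j → s i ≠ s j) :
    RData (fun i => c (s i)) (fun i j => E (s i) (s j)) (fun i j k => F (s i) (s j) (s k)) where
  symm i j := h.symm _ _
  cyc i j k a b d := h.cyc _ _ _ (hs a) (hs b) (hs d)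
  rev i j k := h.rev _ _ _
  p0 i j k l a b d e f g := h.p0 _ _ _ _ (hs a) (hs b) (hs d) (hs e) (hs f) (hs g)
  p1 i j k a b d := h.p1 _ _ _ (hs a) (hs b) (hs d)
  p3 i j k a b d := h.p3 _ _ _ (hs a) (hs b) (hs d)
  p4 i j k l a b d e f g := h.p4 _ _ _ _ (hs a) (hs b) (hs d) (hs e) (hs f) (hs g)
  p5 i j k l a b d e f g := h.p5 _ _ _ _ (hs a) (hs b) (hs d) (hs e) (hs f) (hs g)

theorem RData.main {R A : Type*} [CommRing R] [Ring A] [Algebra R A]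
    {c : Fin 4 → R} {E : Fin 4 → Fin 4 → A} {F : Fin 4 → Fin 4 → Fin 4 → A}
    (h : RData c E F) :
    ∀ y, (y = E 0 1 ∨ y = E 0 2 ∨ y = E 1 2) ∨ y = E 2 3 →
      (casTwo (c 0) (c 1) (c 2) (E 0 1) (E 1 2) (E 0 1 + E 0 2 + E 1 2 - (c 0 + c 1 + c 2 : R) • (1 : A)) (F 0 1 2)) * y - y * (casTwo (c 0) (c 1) (c 2) (E 0 1) (E 1 2) (E 0 1 + E 0 2 + E 1 2 - (c 0 + c 1 + c 2 : R) • (1 : A)) (F 0 1 2)) = 0 := by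
  have hcyc := fun i j k (q : i ≠ j ∧ i ≠ k ∧ j ≠ k) => h.cyc i j k q.1 q.2.1 q.2.2
  have p1 := fun i j k (q : i ≠ j ∧ i ≠ k ∧ j ≠ k) => h.p1 i j k q.1 q.2.1 q.2.2
  have p3 := fun i j k (q : i ≠ j ∧ i ≠ k ∧ j ≠ k) => h.p3 i j k q.1 q.2.1 q.2.2
  have p0 := fun i j k l (q : (i ≠ j ∧ i ≠ k ∧ i ≠ l) ∧ j ≠ k ∧ j ≠ l ∧ k ≠ l) =>
    h.p0 i j k l q.1.1 q.1.2.1 q.1.2.2 q.2.1 q.2.2.1 q.2.2.2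
  have p4 := fun i j k l (q : (i ≠ j ∧ i ≠ k ∧ i ≠ l) ∧ j ≠ k ∧ j ≠ l ∧ k ≠ l) =>
    h.p4 i j k l q.1.1 q.1.2.1 q.1.2.2 q.2.1 q.2.2.1 q.2.2.2
  have p5 := fun i j k l (q : (i ≠ j ∧ i ≠ k ∧ i ≠ l) ∧ j ≠ k ∧ j ≠ l ∧ k ≠ l) =>
    h.p5 i j k l q.1.1 q.1.2.1 q.1.2.2 q.2.1 q.2.2.1 q.2.2.2
  have e10 : E 1 0 = E 0 1 := h.symm 0 1
  have e20 : E 2 0 = E 0 2 := h.symm 0 2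
  have e21 : E 2 1 = E 1 2 := h.symm 1 2
  have e30 : E 3 0 = E 0 3 := h.symm 0 3
  have e31 : E 3 1 = E 1 3 := h.symm 1 3
  have e32 : E 3 2 = E 2 3 := h.symm 2 3
  have f120 : F 1 2 0 = F 0 1 2 := hcyc 0 1 2 (by decide)
  have f201 : F 2 0 1 = F 0 1 2 := (hcyc 1 2 0 (by decide)).trans f120
  have f210 : F 2 1 0 = -F 0 1 2 := h.rev 0 1 2
  have f021 : F 0 2 1 = -F 0 1 2 := (h.rev 1 2 0).trans (by rw [f120])
  have f102 : F 1 0 2 = -F 0 1 2 := (h.rev 2 0 1).trans (by rw [f201])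
  have f130 : F 1 3 0 = F 0 1 3 := hcyc 0 1 3 (by decide)
  have f301 : F 3 0 1 = F 0 1 3 := (hcyc 1 3 0 (by decide)).trans f130
  have f310 : F 3 1 0 = -F 0 1 3 := h.rev 0 1 3
  have f031 : F 0 3 1 = -F 0 1 3 := (h.rev 1 3 0).trans (by rw [f130])
  have f103 : F 1 0 3 = -F 0 1 3 := (h.rev 3 0 1).trans (by rw [f301])
  have f230 : F 2 3 0 = F 0 2 3 := hcyc 0 2 3 (by decide)
  have f302 : F 3 0 2 = F 0 2 3 := (hcyc 2 3 0 (by decide)).trans f230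
  have f320 : F 3 2 0 = -F 0 2 3 := h.rev 0 2 3
  have f032 : F 0 3 2 = -F 0 2 3 := (h.rev 2 3 0).trans (by rw [f230])
  have f203 : F 2 0 3 = -F 0 2 3 := (h.rev 3 0 2).trans (by rw [f302])
  have f231 : F 2 3 1 = F 1 2 3 := hcyc 1 2 3 (by decide)
  have f312 : F 3 1 2 = F 1 2 3 := (hcyc 2 3 1 (by decide)).trans f231
  have f321 : F 3 2 1 = -F 1 2 3 := h.rev 1 2 3
  have f132 : F 1 3 2 = -F 1 2 3 := (h.rev 2 3 1).trans (by rw [f231])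
  have f213 : F 2 1 3 = -F 1 2 3 := (h.rev 3 1 2).trans (by rw [f312])
  have r_x13_x12 : E 0 2 * E 0 1 = E 0 1 * E 0 2 + (2 : R) • F 0 1 2 := by
    have q := p1 1 0 2 (by decide)
    try simp only [e10, f102, neg_neg, sub_neg_eq_add, smul_neg] at q
    linear_combination (norm := module) (-1 : R) • q
  have r_x23_x12 : E 1 2 * E 0 1 = E 0 1 * E 1 2 - (2 : R) • F 0 1 2 := by
    have q := p1 0 1 2 (by decide)
    try simp only [neg_neg, sub_neg_eq_add, smul_neg] at q
    linear_combination (norm := module) (-1 : R) • q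
  have r_x23_x13 : E 1 2 * E 0 2 = E 0 2 * E 1 2 + (2 : R) • F 0 1 2 := by
    have q := p1 0 2 1 (by decide)
    try simp only [e21, f021, neg_neg, sub_neg_eq_add, smul_neg] at q
    linear_combination (norm := module) (-1 : R) • q
  have r_x14_x12 : E 0 3 * E 0 1 = E 0 1 * E 0 3 + (2 : R) • F 0 1 3 := by
    have q := p1 1 0 3 (by decide)
    try simp only [e10, f103, neg_neg, sub_neg_eq_add, smul_neg] at q
    linear_combination (norm := module) (-1 : R) • q
  have r_x14_x13 : E 0 3 * E 0 2 = E 0 2 * E 0 3 + (2 : R) • F 0 2 3 := by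
    have q := p1 2 0 3 (by decide)
    try simp only [e20, f203, neg_neg, sub_neg_eq_add, smul_neg] at q
    linear_combination (norm := module) (-1 : R) • q
  have r_x14_x23 : E 0 3 * E 1 2 = E 1 2 * E 0 3 := by
    have q := p0 0 3 1 2 (by decide)
    try simp only [] at q
    linear_combination (norm := module) (1 : R) • q
  have r_x24_x12 : E 1 3 * E 0 1 = E 0 1 * E 1 3 - (2 : R) • F 0 1 3 := by
    have q := p1 0 1 3 (by decide)
    try simp only [neg_neg, sub_neg_eq_add, smul_neg] at q
    linear_combination (norm := module) (-1 : R) • q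
  have r_x24_x13 : E 1 3 * E 0 2 = E 0 2 * E 1 3 := by
    have q := p0 0 2 1 3 (by decide)
    try simp only [] at q
    linear_combination (norm := module) (-1 : R) • q
  have r_x24_x23 : E 1 3 * E 1 2 = E 1 2 * E 1 3 + (2 : R) • F 1 2 3 := by
    have q := p1 2 1 3 (by decide)
    try simp only [e21, f213, neg_neg, sub_neg_eq_add, smul_neg] at q
    linear_combination (norm := module) (-1 : R) • q
  have r_x34_x12 : E 2 3 * E 0 1 = E 0 1 * E 2 3 := by
    have q := p0 0 1 2 3 (by decide)
    try simp only [] at q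
    linear_combination (norm := module) (-1 : R) • q
  have r_x34_x13 : E 2 3 * E 0 2 = E 0 2 * E 2 3 - (2 : R) • F 0 2 3 := by
    have q := p1 0 2 3 (by decide)
    try simp only [neg_neg, sub_neg_eq_add, smul_neg] at q
    linear_combination (norm := module) (-1 : R) • q
  have r_x34_x23 : E 2 3 * E 1 2 = E 1 2 * E 2 3 - (2 : R) • F 1 2 3 := by
    have q := p1 1 2 3 (by decide)
    try simp only [neg_neg, sub_neg_eq_add, smul_neg] at q
    linear_combination (norm := module) (-1 : R) • q
  have r_f123_x12 : F 0 1 2 * E 0 1 = E 0 1 * F 0 1 2 + E 0 1 * E 0 2 - E 1 2 * E 0 1 + (-c 0 + c 1 : R) • E 0 1 + (-c 0 + c 1 : R) • E 0 2 + (-c 0 + c 1 : R) • E 1 2 + (c 0^2 + 2 * c 0 * c 2 - c 1^2 - 2 * c 1 * c 2 : R) • (1 : A) := by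
    have q := p3 2 0 1 (by decide)
    try simp only [e20, e21, f201, mul_neg, neg_mul, neg_neg, sub_neg_eq_add] at q
    linear_combination (norm := module) (-1 : R) • q
  have r_f123_x13 : F 0 1 2 * E 0 2 = E 0 2 * F 0 1 2 - E 0 2 * E 0 1 + E 1 2 * E 0 2 + (c 0 - c 2 : R) • E 0 1 + (c 0 - c 2 : R) • E 0 2 + (c 0 - c 2 : R) • E 1 2 + (-c 0^2 - 2 * c 0 * c 1 + 2 * c 1 * c 2 + c 2^2 : R) • (1 : A) := by
    have q := p3 1 0 2 (by decide)
    try simp only [e10, f102, mul_neg, neg_mul, neg_neg, sub_neg_eq_add] at q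
    linear_combination (norm := module) (1 : R) • q
  have r_f123_x23 : F 0 1 2 * E 1 2 = E 1 2 * F 0 1 2 - E 0 2 * E 1 2 + E 1 2 * E 0 1 + (-c 1 + c 2 : R) • E 0 1 + (-c 1 + c 2 : R) • E 0 2 + (-c 1 + c 2 : R) • E 1 2 + (2 * c 0 * c 1 - 2 * c 0 * c 2 + c 1^2 - c 2^2 : R) • (1 : A) := by
    have q := p3 0 1 2 (by decide)
    try simp only [mul_neg, neg_mul, neg_neg, sub_neg_eq_add] at q
    linear_combination (norm := module) (-1 : R) • q
  have r_f123_x14 : F 0 1 2 * E 0 3 = E 0 3 * F 0 1 2 - E 0 1 * E 2 3 + E 1 3 * E 0 2 + (c 2 + c 3 : R) • E 0 1 - (c 1 + c 3 : R) • E 0 2 - (c 0 + c 2 : R) • E 1 3 + (c 0 + c 1 : R) • E 2 3 + (c 0 * c 1 - c 0 * c 2 - c 1 * c 3 + c 2 * c 3 : R) • (1 : A) := by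
    have q := p4 1 2 0 3 (by decide)
    try simp only [e10, e20, f120, mul_neg, neg_mul, neg_neg, sub_neg_eq_add] at q
    linear_combination (norm := module) (-1 : R) • q
  have r_f123_x24 : F 0 1 2 * E 1 3 = E 1 3 * F 0 1 2 + E 0 1 * E 2 3 - E 0 3 * E 1 2 - (c 2 + c 3 : R) • E 0 1 + (c 0 + c 3 : R) • E 1 2 + (c 1 + c 2 : R) • E 0 3 - (c 0 + c 1 : R) • E 2 3 + (-c 0 * c 1 + c 0 * c 3 + c 1 * c 2 - c 2 * c 3 : R) • (1 : A) := by
    have q := p4 0 2 1 3 (by decide)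
    try simp only [e21, f021, mul_neg, neg_mul, neg_neg, sub_neg_eq_add] at q
    linear_combination (norm := module) (1 : R) • q
  have r_f123_x34 : F 0 1 2 * E 2 3 = E 2 3 * F 0 1 2 - E 0 2 * E 1 3 + E 0 3 * E 1 2 + (c 1 + c 3 : R) • E 0 2 - (c 0 + c 3 : R) • E 1 2 - (c 1 + c 2 : R) • E 0 3 + (c 0 + c 2 : R) • E 1 3 + (c 0 * c 2 - c 0 * c 3 - c 1 * c 2 + c 1 * c 3 : R) • (1 : A) := by
    have q := p4 0 1 2 3 (by decide)
    try simp only [mul_neg, neg_mul, neg_neg, sub_neg_eq_add] at q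
    linear_combination (norm := module) (-1 : R) • q
  have r_f124_x12 : F 0 1 3 * E 0 1 = E 0 1 * F 0 1 3 + E 0 1 * E 0 3 - E 1 3 * E 0 1 + (-c 0 + c 1 : R) • E 0 1 + (-c 0 + c 1 : R) • E 0 3 + (-c 0 + c 1 : R) • E 1 3 + (c 0^2 + 2 * c 0 * c 3 - c 1^2 - 2 * c 1 * c 3 : R) • (1 : A) := by
    have q := p3 3 0 1 (by decide)
    try simp only [e30, e31, f301, mul_neg, neg_mul, neg_neg, sub_neg_eq_add] at q
    linear_combination (norm := module) (-1 : R) • q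
  have r_f124_x13 : F 0 1 3 * E 0 2 = E 0 2 * F 0 1 3 - E 0 1 * E 2 3 + E 1 2 * E 0 3 + (c 2 + c 3 : R) • E 0 1 - (c 0 + c 3 : R) • E 1 2 - (c 1 + c 2 : R) • E 0 3 + (c 0 + c 1 : R) • E 2 3 + (c 0 * c 1 - c 0 * c 3 - c 1 * c 2 + c 2 * c 3 : R) • (1 : A) := by
    have q := p4 1 3 0 2 (by decide)
    try simp only [e10, e32, e30, f130, mul_neg, neg_mul, neg_neg, sub_neg_eq_add] at q
    linear_combination (norm := module) (-1 : R) • q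
  have r_f124_x23 : F 0 1 3 * E 1 2 = E 1 2 * F 0 1 3 + E 0 1 * E 2 3 - E 0 2 * E 1 3 - (c 2 + c 3 : R) • E 0 1 + (c 1 + c 3 : R) • E 0 2 + (c 0 + c 2 : R) • E 1 3 - (c 0 + c 1 : R) • E 2 3 + (-c 0 * c 1 + c 0 * c 2 + c 1 * c 3 - c 2 * c 3 : R) • (1 : A) := by
    have q := p4 0 3 1 2 (by decide)
    try simp only [e32, e31, f031, mul_neg, neg_mul, neg_neg, sub_neg_eq_add] at q
    linear_combination (norm := module) (1 : R) • q
  have r_f134_x12 : F 0 2 3 * E 0 1 = E 0 1 * F 0 2 3 - E 0 2 * E 1 3 + E 1 2 * E 0 3 + (c 1 + c 3 : R) • E 0 2 - (c 0 + c 3 : R) • E 1 2 - (c 1 + c 2 : R) • E 0 3 + (c 0 + c 2 : R) • E 1 3 + (c 0 * c 2 - c 0 * c 3 - c 1 * c 2 + c 1 * c 3 : R) • (1 : A) := by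
    have q := p4 2 3 0 1 (by decide)
    try simp only [e20, e31, e21, e30, f230, mul_neg, neg_mul, neg_neg, sub_neg_eq_add] at q
    linear_combination (norm := module) (-1 : R) • q
  have r_f134_x13 : F 0 2 3 * E 0 2 = E 0 2 * F 0 2 3 + E 0 2 * E 0 3 - E 2 3 * E 0 2 + (-c 0 + c 2 : R) • E 0 2 + (-c 0 + c 2 : R) • E 0 3 + (-c 0 + c 2 : R) • E 2 3 + (c 0^2 + 2 * c 0 * c 3 - c 2^2 - 2 * c 2 * c 3 : R) • (1 : A) := by
    have q := p3 3 0 2 (by decide)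
    try simp only [e30, e32, f302, mul_neg, neg_mul, neg_neg, sub_neg_eq_add] at q
    linear_combination (norm := module) (-1 : R) • q
  have r_f134_x23 : F 0 2 3 * E 1 2 = E 1 2 * F 0 2 3 - E 0 1 * E 2 3 + E 0 2 * E 1 3 + (c 2 + c 3 : R) • E 0 1 - (c 1 + c 3 : R) • E 0 2 - (c 0 + c 2 : R) • E 1 3 + (c 0 + c 1 : R) • E 2 3 + (c 0 * c 1 - c 0 * c 2 - c 1 * c 3 + c 2 * c 3 : R) • (1 : A) := by
    have q := p4 0 3 2 1 (by decide)
    try simp only [e21, e31, e32, f032, mul_neg, neg_mul, neg_neg, sub_neg_eq_add] at q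
    linear_combination (norm := module) (1 : R) • q
  have r_f234_x12 : F 1 2 3 * E 0 1 = E 0 1 * F 1 2 3 + E 0 2 * E 1 3 - E 1 2 * E 0 3 - (c 1 + c 3 : R) • E 0 2 + (c 0 + c 3 : R) • E 1 2 + (c 1 + c 2 : R) • E 0 3 - (c 0 + c 2 : R) • E 1 3 + (-c 0 * c 2 + c 0 * c 3 + c 1 * c 2 - c 1 * c 3 : R) • (1 : A) := by
    have q := p4 2 3 1 0 (by decide)
    try simp only [e10, e21, e30, e20, e31, f231, mul_neg, neg_mul, neg_neg, sub_neg_eq_add] at q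
    linear_combination (norm := module) (-1 : R) • q
  have r_f234_x13 : F 1 2 3 * E 0 2 = E 0 2 * F 1 2 3 - E 0 1 * E 2 3 + E 1 2 * E 0 3 + (c 2 + c 3 : R) • E 0 1 - (c 0 + c 3 : R) • E 1 2 - (c 1 + c 2 : R) • E 0 3 + (c 0 + c 1 : R) • E 2 3 + (c 0 * c 1 - c 0 * c 3 - c 1 * c 2 + c 2 * c 3 : R) • (1 : A) := by
    have q := p4 1 3 2 0 (by decide)
    try simp only [e20, e30, e10, e32, f132, mul_neg, neg_mul, neg_neg, sub_neg_eq_add] at q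
    linear_combination (norm := module) (1 : R) • q
  have r_f234_x23 : F 1 2 3 * E 1 2 = E 1 2 * F 1 2 3 + E 1 2 * E 1 3 - E 2 3 * E 1 2 + (-c 1 + c 2 : R) • E 1 2 + (-c 1 + c 2 : R) • E 1 3 + (-c 1 + c 2 : R) • E 2 3 + (c 1^2 + 2 * c 1 * c 3 - c 2^2 - 2 * c 2 * c 3 : R) • (1 : A) := by
    have q := p3 3 1 2 (by decide)
    try simp only [e31, e32, f312, mul_neg, neg_mul, neg_neg, sub_neg_eq_add] at q
    linear_combination (norm := module) (-1 : R) • q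
  have r_f124_f123 : F 0 1 3 * F 0 1 2 = F 0 1 2 * F 0 1 3 - F 0 2 3 * E 0 1 - F 1 2 3 * E 0 1 + (c 0 + c 1 : R) • F 0 2 3 + (c 0 + c 1 : R) • F 1 2 3 := by
    have q := p5 2 0 1 3 (by decide)
    try simp only [f201, f203, f213, mul_neg, neg_mul, neg_neg, sub_neg_eq_add, neg_add, add_mul, mul_sub, mul_one, mul_add, mul_smul_comm] at q
    linear_combination (norm := module) (-1 : R) • q
  have r_f134_f123 : F 0 2 3 * F 0 1 2 = F 0 1 2 * F 0 2 3 + F 0 1 3 * E 0 2 - F 1 2 3 * E 0 2 - (c 0 + c 2 : R) • F 0 1 3 + (c 0 + c 2 : R) • F 1 2 3 := by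
    have q := p5 1 0 2 3 (by decide)
    try simp only [f102, f103, mul_neg, neg_mul, neg_neg, sub_neg_eq_add, neg_add, add_mul, mul_sub, mul_one, mul_add, mul_smul_comm] at q
    linear_combination (norm := module) (1 : R) • q
  have r_f234_f123 : F 1 2 3 * F 0 1 2 = F 0 1 2 * F 1 2 3 + F 0 1 3 * E 1 2 + F 0 2 3 * E 1 2 - (c 1 + c 2 : R) • F 0 1 3 - (c 1 + c 2 : R) • F 0 2 3 := by
    have q := p5 0 1 2 3 (by decide)
    try simp only [mul_neg, neg_mul, neg_neg, sub_neg_eq_add, neg_add, add_mul, mul_sub, mul_one, mul_add, mul_smul_comm] at q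
    linear_combination (norm := module) (-1 : R) • q
  rintro y (hy | rfl)
  · exact cas_inner (c 0) (c 1) (c 2) (E 0 1) (E 0 2) (E 1 2) (F 0 1 2) y hy
      r_x13_x12 r_x23_x12 r_x23_x13 r_f123_x12 r_f123_x13 r_f123_x23
  · exact cas_x34 (c 0) (c 1) (c 2) (c 3) (E 0 1) (E 0 2) (E 1 2) (E 0 3) (E 1 3) (E 2 3) (F 0 1 2) (F 0 1 3) (F 0 2 3) (F 1 2 3)
      r_x13_x12 r_x23_x12 r_x23_x13 r_x14_x12 r_x14_x13 r_x14_x23 r_x24_x12 r_x24_x13 r_x24_x23 r_x34_x12 r_x34_x13 r_x34_x23 r_f123_x12 r_f123_x13 r_f123_x23 r_f123_x14 r_f123_x24 r_f123_x34 r_f124_x12 r_f124_x13 r_f124_x23 r_f134_x12 r_f134_x13 r_f134_x23 r_f234_x12 r_f234_x13 r_f234_x23 r_f124_f123 r_f134_f123 r_f234_f123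

theorem triple_eq {A : Type*} [Ring A] [Algebra ℂ A] (C : Finset (Fin 4) → A) (h2 : RelR2 C)
    (i j k : Fin 4) (hij : i ≠ j) (hik : i ≠ k) (hjk : j ≠ k) :
    C ({i} ∪ {j} ∪ {k}) = C {i, j} + C {i, k} + C {j, k} - C {i} - C {j} - C {k} := by
  have hs : ({i} ∪ {j} ∪ {k} : Finset (Fin 4)) = {i, j, k} := by
    ext x; simp [or_assoc]
  have hcard : ({i, j, k} : Finset (Fin 4)).card = 3 := by
    rw [Finset.card_eq_three]; exact ⟨i, j, k, hij, hik, hjk, rfl⟩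
  have d1 : ({i, j, k} : Finset (Fin 4)) \ {i} = {j, k} := by
    ext x; simp only [Finset.mem_sdiff, Finset.mem_insert, Finset.mem_singleton]; grind
  have d2 : ({i, j, k} : Finset (Fin 4)) \ {j} = {i, k} := by
    ext x; simp only [Finset.mem_sdiff, Finset.mem_insert, Finset.mem_singleton]; grind
  have d3 : ({i, j, k} : Finset (Fin 4)) \ {k} = {i, j} := by
    ext x; simp only [Finset.mem_sdiff, Finset.mem_insert, Finset.mem_singleton]; grind
  have q := h2 {i, j, k} (by rw [hcard])
  have n1 : i ∉ ({j, k} : Finset (Fin 4)) := by simp [hij, hik]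
  have n2 : j ∉ ({k} : Finset (Fin 4)) := by simp [hjk]
  have n3 : i ∉ ({k} : Finset (Fin 4)) := by simp [hik]
  have n4 : i ∉ ({j} : Finset (Fin 4)) := by simp [hij]
  rw [hcard, Finset.sum_insert n1, Finset.sum_insert n2, Finset.sum_singleton, d1, d2, d3,
    Finset.sum_insert n2, Finset.sum_insert n3, Finset.sum_insert n4, Finset.sum_insert n1,
    Finset.sum_insert n2] at q
  simp only [Finset.sum_singleton] at q
  rw [Finset.pair_comm j i, Finset.pair_comm k i, Finset.pair_comm k j] at q
  rw [hs, q]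
  push_cast
  module

/-- The central element `C_i`, as a scalar. -/
def zc {A : Type*} [Ring A] [Algebra ℂ A] (C : Finset (Fin 4) → A)
    (hc : ∀ i x, C {i} * x = x * C {i}) (i : Fin 4) : Subring.center A :=
  ⟨C {i}, Subring.mem_center_iff.2 fun x => (hc i x).symm⟩

theorem zc_smul {A : Type*} [Ring A] [Algebra ℂ A] (C : Finset (Fin 4) → A)
    (hc : ∀ i x, C {i} * x = x * C {i}) (i : Fin 4) (x : A) : zc C hc i • x = C {i} * x := rfl

theorem two_center {A : Type*} [Ring A] [Algebra ℂ A] (x : A) :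
    (2 : Subring.center A) • x = (2 : ℂ) • x := by
  rw [two_smul, two_smul]

theorem rdata {A : Type*} [Ring A] [Algebra ℂ A] (C : Finset (Fin 4) → A)
    (hc : ∀ i x, C {i} * x = x * C {i})
    (h1 : RelR1 C) (h2 : RelR2 C) (h3 : RelR3 C) (h4 : RelR4 C) (h5 : RelR5 C) :
    RData (zc C hc) (fun i j => C {i, j})
      (fun i j k => ((1 : ℂ) / 2) • cm (C {i, j}) (C {j, k})) where
  symm i j := by rw [Finset.pair_comm]
  cyc i j k hij hik hjk := by
    have q := (h3 {i} {j} {k} (by simp) (by simp) (by simp) (by simpa using hij)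
      (by simpa using hjk) (by simpa using hik)).1
    have q' : cm (C {i, j}) (C {j, k}) = cm (C {j, k}) (C {i, k}) := q
    simp only [q', Finset.pair_comm k i]
  rev i j k := by
    simp only [Finset.pair_comm k j, Finset.pair_comm j i, cm]
    module
  p0 i j k l hij hik hil hjk hjl hkl := by
    have q := h1 {i, j} {k, l} (Or.inl (by
      ext x; simp only [Finset.mem_inter, Finset.mem_insert, Finset.mem_singleton]; grind))
    exact sub_eq_zero.1 q
  p1 i j k hij hik hjk := by
    simp only [two_center, cm]
    module
  p3 i j k hij hik hjk := by
    have q : cm (C {j, k}) (cm (C {i, j}) (C {j, k})) =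
      2 * (C {i, k} * C {j, k}) - 2 * (C {j, k} * C {i, j})
        + 2 * ((C {j} - C {k}) * (C ({i} ∪ {j} ∪ {k}) - C {i})) :=
      (h3 {i} {j} {k} (by simp) (by simp) (by simp) (by simpa using hij)
      (by simpa using hjk) (by simpa using hik)).2.2
    rw [triple_eq C h2 i j k hij hik hjk] at q
    simp only [cm, two_mul, mul_add, add_mul, mul_sub, sub_mul, mul_assoc] at q
    simp only [cm, sub_smul, add_smul, mul_smul, two_center, zc_smul, mul_add, add_mul, mul_sub,
      sub_mul, mul_assoc, mul_smul_comm, smul_mul_assoc, mul_one]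
    linear_combination (norm := module) ((1 : ℂ) / 2) • q
  p4 i j k l hij hik hil hjk hjl hkl := by
    have q := h4 i j k l hij hik hil hjk hjl hkl
    simp only [cm, mul_add, add_mul, mul_sub, sub_mul, mul_assoc] at q
    simp only [cm, sub_smul, add_smul, mul_smul, zc_smul, mul_add, add_mul, mul_sub,
      sub_mul, mul_assoc, mul_smul_comm, smul_mul_assoc, mul_one]
    linear_combination (norm := module) (1 : ℂ) • q
  p5 i j k l hij hik hil hjk hjl hkl := by
    have q := h5 i j k l hij hik hil hjk hjl hkl
    simp only [cm, mul_add, add_mul, mul_sub, sub_mul, mul_assoc] at q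
    simp only [cm, sub_smul, add_smul, mul_smul, zc_smul, mul_add, add_mul, mul_sub,
      sub_mul, mul_assoc, mul_smul_comm, smul_mul_assoc, mul_one]
    linear_combination (norm := module) ((1 : ℂ) / 2) • q

theorem casTwo_symm {R A : Type*} [CommRing R] [Ring A] [Algebra R A]
    (c1 c2 c3 : R) (a b d f : A) :
    casTwo c3 c2 c1 b a d (-f) = casTwo c1 c2 c3 a b d f := by
  unfold casTwo
  simp only [mul_add, add_mul, mul_sub, sub_mul, mul_neg, neg_mul, smul_mul_assoc, mul_smul_comm,
    mul_one, one_mul, mul_assoc]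
  module

theorem casTwo_eq {A : Type*} [Ring A] [Algebra ℂ A] (C : Finset (Fin 4) → A)
    (hc : ∀ i x, C {i} * x = x * C {i}) (d : A) (hd : C ({0} ∪ {1} ∪ {2}) = d) :
    casTwo (zc C hc 0) (zc C hc 1) (zc C hc 2) (C {0, 1}) (C {1, 2}) d
      (((1 : ℂ) / 2) • cm (C {0, 1}) (C {1, 2})) = (2 : ℂ) • wElt C {0} {1} {2} := by
  have w0 : wElt C {0} {1} {2} = wElt C {0} {1} {2} := rfl
  unfold casTwo
  conv_rhs => rw [wElt, hd, show ({0} ∪ {1} : Finset (Fin 4)) = {0, 1} from rfl,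
    show ({1} ∪ {2} : Finset (Fin 4)) = {1, 2} from rfl]
  simp only [cm, acm, sub_smul, add_smul, mul_smul, two_center, zc_smul, mul_add, add_mul, mul_sub,
      sub_mul, mul_assoc, mul_smul_comm, smul_mul_assoc, mul_one, one_mul, pow_two, two_mul]
  have e1 : ∀ x, d * (C {0} * x) = C {0} * (d * x) := fun x => by
    rw [← mul_assoc, ← hc, mul_assoc]
  have e2 : ∀ x, d * (C {1} * x) = C {1} * (d * x) := fun x => by
    rw [← mul_assoc, ← hc, mul_assoc]
  have e3 : ∀ x, d * (C {2} * x) = C {2} * (d * x) := fun x => by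
    rw [← mul_assoc, ← hc, mul_assoc]
  have e4 : ∀ i, d * C {i} = C {i} * d := fun i => (hc i d).symm
  have s1 : C {1} * C {0} = C {0} * C {1} := hc 1 _
  have s2 : C {2} * C {0} = C {0} * C {2} := hc 2 _
  have s3 : C {2} * C {1} = C {1} * C {2} := hc 2 _
  have t1 : ∀ x, C {1} * (C {0} * x) = C {0} * (C {1} * x) := fun x => by rw [← mul_assoc, s1, mul_assoc]
  have t2 : ∀ x, C {2} * (C {0} * x) = C {0} * (C {2} * x) := fun x => by rw [← mul_assoc, s2, mul_assoc]
  have t3 : ∀ x, C {2} * (C {1} * x) = C {1} * (C {2} * x) := fun x => by rw [← mul_assoc, s3, mul_assoc]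
  simp only [e1, e2, e3, e4, s1, s2, s3, t1, t2, t3]
  module

theorem wElt_coe {A : Type*} [Ring A] [Algebra ℂ A] (S : Subalgebra ℂ A)
    (D : Finset (Fin 4) → S) (I J K : Finset (Fin 4)) :
    ((wElt D I J K : S) : A) = wElt (fun I => (D I : A)) I J K := rfl

theorem wElt_comm {A : Type*} [Ring A] [Algebra ℂ A] (C : Finset (Fin 4) → A) (x : A)
    (hx : ∀ I, Commute (C I) x) (I J K : Finset (Fin 4)) : Commute (wElt C I J K) x := by
  have hm : ∀ I, C I ∈ Subalgebra.centralizer ℂ {x} := fun I => by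
    rw [Subalgebra.mem_centralizer_iff]
    rintro y rfl
    exact (hx I).eq.symm
  have q := (wElt (fun I => (⟨C I, hm I⟩ : Subalgebra.centralizer ℂ {x})) I J K).2
  rw [wElt_coe, Subalgebra.mem_centralizer_iff] at q
  exact (q x rfl).symm

theorem univ_eq {A : Type*} [Ring A] [Algebra ℂ A] (C : Finset (Fin 4) → A) (h2 : RelR2 C) :
    C {1, 3} = C univ - C {0, 1} - C {0, 2} - C {0, 3} - C {1, 2} - C {2, 3}
      + (2 : ℂ) • (C {0} + C {1} + C {2} + C {3}) := by
  have q := h2 univ (by simp)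
  have d0 : (univ : Finset (Fin 4)) \ {0} = {1, 2, 3} := by decide
  have d1 : (univ : Finset (Fin 4)) \ {1} = {0, 2, 3} := by decide
  have d2 : (univ : Finset (Fin 4)) \ {2} = {0, 1, 3} := by decide
  have d3 : (univ : Finset (Fin 4)) \ {3} = {0, 1, 2} := by decide
  rw [Fin.sum_univ_four, Fin.sum_univ_four, d0, d1, d2, d3,
    Finset.sum_insert (by decide), Finset.sum_insert (by decide), Finset.sum_insert (by decide),
    Finset.sum_insert (by decide), Finset.sum_insert (by decide), Finset.sum_insert (by decide),
    Finset.sum_insert (by decide), Finset.sum_insert (by decide)] at q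
  simp only [Finset.sum_singleton, Finset.card_univ, Fintype.card_fin] at q
  rw [Finset.pair_comm 1 0, Finset.pair_comm 2 0, Finset.pair_comm 2 1, Finset.pair_comm 3 0,
    Finset.pair_comm 3 1, Finset.pair_comm 3 2] at q
  rw [q]
  push_cast
  module

theorem central_case {A : Type*} [Ring A] [Algebra ℂ A] (C : Finset (Fin 4) → A)
    (hc : ∀ i x, C {i} * x = x * C {i})
    (h1 : RelR1 C) (h2 : RelR2 C) (h3 : RelR3 C) (h4 : RelR4 C) (h5 : RelR5 C) :
    (∀ i j, i ≠ j → Commute (wElt C {0} {1} {2}) (C {i, j})) := by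
  have rd := rdata C hc h1 h2 h3 h4 h5
  have m := rd.main
  have m' := (rd.perm (Equiv.swap 0 2) (fun h => (Equiv.swap 0 2).injective.ne h)).main
  have s0 : (Equiv.swap (0 : Fin 4) 2) 0 = 2 := by decide
  have s1 : (Equiv.swap (0 : Fin 4) 2) 1 = 1 := by decide
  have s2 : (Equiv.swap (0 : Fin 4) 2) 2 = 0 := by decide
  have s3 : (Equiv.swap (0 : Fin 4) 2) 3 = 3 := by decide
  simp only [s0, s1, s2, s3] at m'
  have hd : C ({0} ∪ {1} ∪ {2}) = C {0, 1} + C {0, 2} + C {1, 2}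
      - (zc C hc 0 + zc C hc 1 + zc C hc 2) • (1 : A) := by
    rw [triple_eq C h2 0 1 2 (by decide) (by decide) (by decide)]
    simp only [add_smul, zc_smul, mul_one]
    abel
  have hd' : C {2, 1} + C {2, 0} + C {1, 0} - (zc C hc 2 + zc C hc 1 + zc C hc 0) • (1 : A)
      = C ({0} ∪ {1} ∪ {2}) := by
    rw [hd, Finset.pair_comm 2 1, Finset.pair_comm 2 0, Finset.pair_comm 1 0]
    module
  have hf : ((1 : ℂ) / 2) • cm (C {2, 1}) (C {1, 0})
      = -(((1 : ℂ) / 2) • cm (C {0, 1}) (C {1, 2})) := by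
    rw [Finset.pair_comm 2 1, Finset.pair_comm 1 0, cm, cm]
    module
  rw [hf, hd', Finset.pair_comm 2 1, Finset.pair_comm 1 0, casTwo_symm,
    casTwo_eq C hc _ rfl] at m'
  rw [casTwo_eq C hc _ hd] at m
  have key : ∀ x, (2 : ℂ) • wElt C {0} {1} {2} * x - x * (2 : ℂ) • wElt C {0} {1} {2} = 0 →
      Commute (wElt C {0} {1} {2}) x := by
    intro x hx
    rw [smul_mul_assoc, mul_smul_comm, ← smul_sub] at hx
    exact sub_eq_zero.1 ((smul_eq_zero.1 hx).resolve_left two_ne_zero)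
  have k01 := key _ (m _ (Or.inl (Or.inl rfl)))
  have k02 := key _ (m _ (Or.inl (Or.inr (Or.inl rfl))))
  have k12 := key _ (m _ (Or.inl (Or.inr (Or.inr rfl))))
  have k23 := key _ (m _ (Or.inr rfl))
  have k03 := key _ (m' _ (Or.inr rfl))
  have kc : ∀ i, Commute (wElt C {0} {1} {2}) (C {i}) := fun i => (hc i _).symm
  have kU : Commute (wElt C {0} {1} {2}) (C univ) :=
    wElt_comm C _ (fun I => sub_eq_zero.1 (h1 I univ (Or.inr (Or.inl (Finset.subset_univ I))))) _ _ _
  have k13 : Commute (wElt C {0} {1} {2}) (C {1, 3}) := by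
    rw [univ_eq C h2]
    exact (((((kU.sub_right k01).sub_right k02).sub_right k03).sub_right k12).sub_right
      k23).add_right (((((kc 0).add_right (kc 1)).add_right (kc 2)).add_right (kc 3)).smul_right _)
  intro i j hij
  fin_cases i <;> fin_cases j <;>
    first
    | exact absurd rfl hij
    | assumption
    | (rw [Finset.pair_comm]; assumption)

theorem pair_case {A : Type*} [Ring A] [Algebra ℂ A] (C : Finset (Fin 4) → A)
    (h1 : RelR1 C) (h2 : RelR2 C) (h3 : RelR3 C) (h4 : RelR4 C) (h5 : RelR5 C) :
    (∀ i j, i ≠ j → Commute (wElt C {0} {1} {2}) (C {i, j})) := by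
  have hm : ∀ I, C I ∈ Subalgebra.centralizer ℂ (Set.range fun i => C {i}) := fun I => by
    rw [Subalgebra.mem_centralizer_iff]
    rintro y ⟨i, rfl⟩
    refine sub_eq_zero.1 (h1 {i} I ?_)
    by_cases hi : i ∈ I
    · exact Or.inr (Or.inl (by simpa using hi))
    · exact Or.inl (Finset.singleton_inter_of_notMem hi)
  let D : Finset (Fin 4) → Subalgebra.centralizer ℂ (Set.range fun i => C {i}) :=
    fun I => ⟨C I, hm I⟩
  have hc : ∀ i x, D {i} * x = x * D {i} := fun i x => by
    apply Subtype.ext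
    exact (Subalgebra.mem_centralizer_iff ℂ).1 x.2 _ ⟨i, rfl⟩
  have r1 : RelR1 D := fun I J h => Subtype.ext (h1 I J h)
  have r2 : RelR2 D := fun I h => by
    apply Subtype.ext
    have q := h2 I h
    simpa [D] using q
  have r3 : RelR3 D := fun I J K a b d e f g =>
    ⟨Subtype.ext (h3 I J K a b d e f g).1, Subtype.ext (h3 I J K a b d e f g).2.1,
      Subtype.ext (h3 I J K a b d e f g).2.2⟩
  have r4 : RelR4 D := fun i j k l a b d e f g => Subtype.ext (h4 i j k l a b d e f g)
  have r5 : RelR5 D := fun i j k l a b d e f g => Subtype.ext (h5 i j k l a b d e f g)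
  intro i j hij
  have q := congrArg Subtype.val (central_case D hc r1 r2 r3 r4 r5 i j hij).eq
  exact q

/-- In `R(4)`, the element `w_{1,2,3}` is central: it commutes with `C_I` for every
nonempty `I ⊆ {1,2,3,4}` (indices `1,2,3,4` are rendered as `0,1,2,3 : Fin 4`). -/
theorem stmt6 (C : Finset (Fin 4) → A) (hC0 : C ∅ = 0)
    (h1 : RelR1 C) (h2 : RelR2 C) (h3 : RelR3 C) (h4 : RelR4 C) (h5 : RelR5 C) :
    ∀ I : Finset (Fin 4), I.Nonempty → cm (wElt C {0} {1} {2}) (C I) = 0 := by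
  have kp := pair_case C h1 h2 h3 h4 h5
  have kc : ∀ i, Commute (wElt C {0} {1} {2}) (C {i}) := fun i =>
    wElt_comm C _ (fun I => by
      refine sub_eq_zero.1 (h1 I {i} ?_)
      by_cases hi : i ∈ I
      · exact Or.inr (Or.inr (by simpa using hi))
      · exact Or.inl (Finset.inter_singleton_of_notMem hi)) _ _ _
  intro I hI
  refine sub_eq_zero.2 ?_
  change Commute _ _
  by_cases hcard : 3 ≤ I.card
  · rw [h2 I hcard]
    refine ((Commute.sum_right _ _ _ fun i _ => Commute.sum_right _ _ _ fun j hj => ?_).smul_right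
      _).sub_right ((Commute.sum_right _ _ _ fun i _ => kc i).smul_right _)
    refine kp i j fun h => ?_
    subst h
    simp at hj
  · have hpos := hI.card_pos
    have hcases : I.card = 1 ∨ I.card = 2 := by omega
    rcases hcases with h | h
    · obtain ⟨i, rfl⟩ := Finset.card_eq_one.1 h
      exact kc i
    · obtain ⟨i, j, hij, rfl⟩ := Finset.card_eq_two.1 h
      exact kp i j hij
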